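/- Let G be a ternary semigroup satisfying condition [Z], and let D be the ternary relation on G defined by the fan formula: c ∈ D(a,b) iff c ∈ a·Id(G) ∪ b·Id(G) or (ca = -cb and c = a²c). Then (G,D) is a real semigroup, i.e., D satisfies all axioms [RS0]–[RS8] (including strong associativity [RS3]). -/

import Mathlib

universe u

/-- A ternary semigroup: a commutative monoid with distinguished elements `0` (`tzero`)
and `-1` (`tneg`) satisfying `x³ = x`, `-1 ≠ 1`, `(-1)(-1) = 1`, `x·0 = 0`, and
`x = -1·x → x = 0`. -/
class TernarySemigroup (G : Type u) extends CommMonoid G where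
  tzero : G
  tneg : G
  cube : ∀ x : G, x * x * x = x
  tneg_ne_one : tneg ≠ 1
  tneg_mul_tneg : tneg * tneg = 1
  mul_tzero : ∀ x : G, x * tzero = tzero
  eq_tzero_of_eq_tneg_mul : ∀ x : G, x = tneg * x → x = tzero

open TernarySemigroup

/-- A TS-character of `G` with values in the ternary semigroup `3 = {-1,0,1}` (`SignType`). -/
def IsTSChar {G : Type u} [TernarySemigroup G] (h : G → SignType) : Prop :=
  (∀ x y : G, h (x * y) = h x * h y) ∧ h 1 = 1 ∧ h (tzero : G) = 0 ∧ h (tneg : G) = -1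

/-- Condition [Z]: the zero sets of elements are totally ordered, algebraically:
`a²b² = a²` or `a²b² = b²` for all `a, b`. -/
def CondZ (G : Type u) [TernarySemigroup G] : Prop :=
  ∀ a b : G, a * a * (b * b) = a * a ∨ a * a * (b * b) = b * b

/-- The transversal representation relation derived from a ternary relation `D`
(`Dt D a b c` means `a ∈ D^t(b,c)`, where `D c a b` means `c ∈ D(a,b)`). -/
def Dt {G : Type u} [TernarySemigroup G] (D : G → G → G → Prop) (a b c : G) : Prop :=
  D a b c ∧ D (tneg * b) (tneg * a) c ∧ D (tneg * c) b (tneg * a)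

/-- The real semigroup axioms [RS0]-[RS8] for a ternary relation `D` on a ternary semigroup
(`D c a b` means `c ∈ D(a,b)`). -/
def IsRealSemigroup {G : Type u} [TernarySemigroup G] (D : G → G → G → Prop) : Prop :=
  (∀ a b c : G, D c a b ↔ D c b a) ∧
  (∀ a b : G, D a a b) ∧
  (∀ a b c d : G, D a b c → D (a * d) (b * d) (c * d)) ∧
  (∀ a b c d e : G, Dt D a b c → Dt D c d e → ∃ x : G, Dt D x b d ∧ Dt D a x e) ∧
  (∀ a b c d e : G, D e (c * c * a) (d * d * b) → D e a b) ∧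
  (∀ a b c d e : G, a * d = b * d → a * e = b * e → D c d e → a * c = b * c) ∧
  (∀ a b c : G, D c a b → Dt D c (c * c * a) (c * c * b)) ∧
  (∀ a b : G, (∃ x : G, Dt D x a (tneg * b) ∧ Dt D x b (tneg * a)) → a = b) ∧
  (∀ a b c : G, D a b c → D (a * a) (b * b) (c * c))

/-- The fan representation relation on a ternary semigroup:
`fanD c a b` means `c ∈ D(a,b)`, i.e. `c ∈ a·Id(G) ∪ b·Id(G)` or (`ca = -cb` and `c = a²c`). -/
def fanD {G : Type u} [TernarySemigroup G] (c a b : G) : Prop :=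
  (∃ x : G, c = a * (x * x)) ∨ (∃ x : G, c = b * (x * x)) ∨
  (c * a = tneg * (c * b) ∧ c = a * a * c)

/-!
Order the elements of `G` by inclusion of supports; condition [Z] says that this preorder is total.
Transversal representation `a ∈ D^t(b, c)` then describes a multivalued addition `a ∈ b + c` in
which a summand of largest support wins, except that `-c + c` is everything whose support lies in
that of `c`. In this form strong associativity is a comparison of supports, and `a = b` whenever
`a - b` and `b - a` share an element.
-/

namespace TernarySemigroup

variable {G : Type u} [TernarySemigroup G] {a b c d e x : G}

instance : HasDistribNeg G where
  neg x := tneg * x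
  neg_neg x := by rw [← mul_assoc, tneg_mul_tneg, one_mul]
  neg_mul x y := mul_assoc tneg x y
  mul_neg x y := mul_left_comm x tneg y

/-- Inclusion of supports: every character of `G` which vanishes at `b` vanishes at `a`. It is
encoded by the identity `b² a = a`, which is equivalent to `a² b² = a²`. -/
def SuppLE (a b : G) : Prop :=
  b * b * a = a

theorem suppLE_iff_sq_mul_sq_eq_sq : SuppLE a b ↔ a * a * (b * b) = a * a := by
  constructor <;> intro h
  · calc a * a * (b * b) = a * (b * b * a) := by ac_rfl
      _ = a * a := by rw [h]
  · calc b * b * a = b * b * (a * a * a) := by rw [cube]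
      _ = a * a * (b * b) * a := by ac_rfl
      _ = a := by rw [h, cube]

theorem suppLE_refl (a : G) : SuppLE a a :=
  cube a

theorem SuppLE.trans (hab : SuppLE a b) (hbc : SuppLE b c) : SuppLE a c := by
  calc c * c * a = c * c * (b * b * a) := by rw [hab]
    _ = c * c * b * (b * a) := by ac_rfl
    _ = b * b * a := by rw [hbc, mul_assoc]
    _ = a := hab

@[simp]
theorem suppLE_neg_right : SuppLE a (-b) ↔ SuppLE a b := by
  simp only [SuppLE, neg_mul_neg]

@[simp]
theorem suppLE_neg_left : SuppLE (-a) b ↔ SuppLE a b := by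
  simp only [SuppLE, mul_neg, neg_inj]

theorem mul_suppLE_left (a b : G) : SuppLE (a * b) a := by
  rw [SuppLE, ← mul_assoc, cube]

theorem suppLE_mul_iff : SuppLE a (b * c) ↔ SuppLE a b ∧ SuppLE a c := by
  constructor
  · intro h
    have h_mul_comm : SuppLE a (c * b) := mul_comm b c ▸ h
    exact ⟨h.trans (mul_suppLE_left b c), h_mul_comm.trans (mul_suppLE_left c b)⟩
  · rintro ⟨hb, hc⟩
    calc b * c * (b * c) * a = b * b * (c * c * a) := by ac_rfl
      _ = a := by rw [hc, hb]

theorem eq_of_eq_neg_of_suppLE (ha : a = -a) (hba : SuppLE b a) : a = b := by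
  have hb : b = -b := by
    calc b = a * a * b := hba.symm
      _ = a * -a * b := by rw [← ha]
      _ = -(a * a * b) := by rw [mul_neg, neg_mul]
      _ = -b := by rw [hba]
  rw [eq_tzero_of_eq_tneg_mul a ha, eq_tzero_of_eq_tneg_mul b hb]

theorem suppLE_total (hZ : CondZ G) (a b : G) : SuppLE a b ∨ SuppLE b a := by
  rw [suppLE_iff_sq_mul_sq_eq_sq, suppLE_iff_sq_mul_sq_eq_sq, mul_comm (b * b)]
  exact hZ a b

theorem suppLE_greatest_cases (hZ : CondZ G) (a b c : G) :
    (SuppLE b a ∧ SuppLE c a) ∨ (SuppLE a b ∧ SuppLE c b) ∨ (SuppLE a c ∧ SuppLE b c) := by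
  rcases suppLE_total hZ a b with hab | hba
  · rcases suppLE_total hZ b c with hbc | hcb
    · exact .inr (.inr ⟨hab.trans hbc, hbc⟩)
    · exact .inr (.inl ⟨hab, hcb⟩)
  · rcases suppLE_total hZ a c with hac | hca
    · exact .inr (.inr ⟨hac, hba.trans hac⟩)
    · exact .inl ⟨hba, hca⟩

theorem fanD_left (a b : G) : fanD a a b :=
  .inl ⟨1, by rw [mul_one, mul_one]⟩

theorem fanD_of_mul_eq_neg_mul (h : c * a = -(c * b)) (hca : SuppLE c a) : fanD c a b :=
  .inr (.inr ⟨h, hca.symm⟩)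

theorem suppLE_right_of_mul_eq_neg_mul (h : c * a = -(c * b)) (hca : SuppLE c a) : SuppLE c b := by
  calc b * b * c = -(-(c * b) * b) := by rw [neg_mul, neg_neg]; ac_rfl
    _ = -(c * a * b) := by rw [h]
    _ = -(c * b) * a := by rw [mul_right_comm, neg_mul]
    _ = a * a * c := by rw [← h]; ac_rfl
    _ = c := hca

theorem fanD_symm (h : fanD c a b) : fanD c b a := by
  rcases h with h | h | ⟨h, hca⟩
  · exact .inr (.inl h)
  · exact .inl h
  · exact fanD_of_mul_eq_neg_mul (neg_eq_iff_eq_neg.mp h.symm)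
      (suppLE_right_of_mul_eq_neg_mul h hca.symm)

theorem fanD_right (a b : G) : fanD b a b :=
  fanD_symm (fanD_left b a)

theorem fanD_neg_self (h : SuppLE c a) : fanD c (-a) a :=
  fanD_of_mul_eq_neg_mul (mul_neg c a) (suppLE_neg_right.mpr h)

theorem fanD_self_neg (h : SuppLE c a) : fanD c a (-a) :=
  fanD_symm (fanD_neg_self h)

theorem fanD_mul_right (d : G) (h : fanD a b c) : fanD (a * d) (b * d) (c * d) := by
  rcases h with ⟨x, rfl⟩ | ⟨x, rfl⟩ | ⟨h, hab⟩
  · exact .inl ⟨x, mul_right_comm b (x * x) d⟩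
  · exact .inr (.inl ⟨x, mul_right_comm c (x * x) d⟩)
  · refine fanD_of_mul_eq_neg_mul ?_ ?_
    · rw [mul_mul_mul_comm, mul_mul_mul_comm a d c, ← neg_mul]
      exact congrArg (· * (d * d)) h
    · calc b * d * (b * d) * (a * d) = b * b * a * (d * d * d) := by ac_rfl
        _ = a * d := by rw [← hab, cube]

theorem fanD_of_fanD_sq_mul (h : fanD e (c * c * a) (d * d * b)) : fanD e a b := by
  rcases h with ⟨x, rfl⟩ | ⟨x, rfl⟩ | ⟨h, hec⟩
  · exact .inl ⟨c * x, by ac_rfl⟩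
  · exact .inr (.inl ⟨d * x, by ac_rfl⟩)
  · have he_left : SuppLE e (c * c * a) := hec.symm
    have he_right : SuppLE e (d * d * b) := suppLE_right_of_mul_eq_neg_mul h he_left
    obtain ⟨⟨hc, -⟩, ha⟩ := by simpa only [suppLE_mul_iff] using he_left
    obtain ⟨⟨hd, -⟩, -⟩ := by simpa only [suppLE_mul_iff] using he_right
    refine fanD_of_mul_eq_neg_mul ?_ ha
    calc e * a = c * c * e * a := by rw [hc]
      _ = e * (c * c * a) := by ac_rfl
      _ = -(e * (d * d * b)) := h
      _ = -(d * d * e * b) := by congr 1; ac_rfl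
      _ = -(e * b) := by rw [hd]

theorem mul_eq_mul_of_fanD (hd : a * d = b * d) (he : a * e = b * e) (h : fanD c d e) :
    a * c = b * c := by
  rcases h with ⟨x, rfl⟩ | ⟨x, rfl⟩ | ⟨-, hcd⟩
  · rw [← mul_assoc, hd, mul_assoc]
  · rw [← mul_assoc, he, mul_assoc]
  · rw [hcd, mul_assoc d, ← mul_assoc a, hd, mul_assoc]

theorem fanD_sq (h : fanD a b c) : fanD (a * a) (b * b) (c * c) := by
  rcases h with ⟨x, rfl⟩ | ⟨x, rfl⟩ | ⟨-, hab⟩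
  · exact .inl ⟨x * x, mul_mul_mul_comm b (x * x) b (x * x)⟩
  · exact .inr (.inl ⟨x * x, mul_mul_mul_comm c (x * x) c (x * x)⟩)
  · exact .inl ⟨a, by rw [← mul_assoc, ← hab]⟩

theorem sq_mul_eq_self_of_eq_mul_sq (h : c = a * (x * x)) : c * c * a = c := by
  subst h
  calc a * (x * x) * (a * (x * x)) * a = a * a * a * (x * x * x * x) := by ac_rfl
    _ = a * (x * x) := by rw [cube, cube]

theorem fanD_trichotomy (h : fanD c a b) :
    c = c * c * a ∨ c = c * c * b ∨ (c * c * a = -(c * c * b) ∧ SuppLE c b) := by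
  rcases h with ⟨x, h⟩ | ⟨x, h⟩ | ⟨h, hca⟩
  · exact .inl (sq_mul_eq_self_of_eq_mul_sq h).symm
  · exact .inr (.inl (sq_mul_eq_self_of_eq_mul_sq h).symm)
  · refine .inr (.inr ⟨?_, suppLE_right_of_mul_eq_neg_mul h hca.symm⟩)
    rw [mul_assoc, mul_assoc, ← mul_neg]
    exact congrArg (c * ·) h

theorem fanD_trichotomy_of_suppLE (h : fanD c a b) (hac : SuppLE a c) (hbc : SuppLE b c) :
    c = a ∨ c = b ∨ (a = -b ∧ SuppLE c b) := by
  have h_tri := fanD_trichotomy h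
  rwa [hac, hbc] at h_tri

theorem dt_fanD_left (h : SuppLE c a) : Dt fanD a a c :=
  ⟨fanD_left a c, fanD_left (-a) c, fanD_self_neg (suppLE_neg_left.mpr h)⟩

theorem dt_fanD_right (h : SuppLE b a) : Dt fanD a b a :=
  ⟨fanD_right b a, fanD_neg_self (suppLE_neg_left.mpr h), fanD_right b (-a)⟩

theorem dt_fanD_neg_self (h : SuppLE a c) : Dt fanD a (-c) c := by
  have h_neg_neg : fanD (- -c) (-a) c := by
    rw [neg_neg]
    exact fanD_right (-a) c
  exact ⟨fanD_neg_self h, h_neg_neg, fanD_left (-c) (-a)⟩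

theorem dt_fanD_sq_mul (h : fanD c a b) : Dt fanD c (c * c * a) (c * c * b) := by
  have sq_mul_suppLE (x : G) : SuppLE (c * c * x) c := mul_assoc c c x ▸ mul_suppLE_left c (c * x)
  rcases fanD_trichotomy h with h_eq | h_eq | ⟨h_eq, hcb⟩
  · rw [← h_eq]
    exact dt_fanD_left (sq_mul_suppLE b)
  · rw [← h_eq]
    exact dt_fanD_right (sq_mul_suppLE a)
  · rw [h_eq]
    have hcc : SuppLE c c := suppLE_refl c
    exact dt_fanD_neg_self (suppLE_mul_iff.mpr ⟨suppLE_mul_iff.mpr ⟨hcc, hcc⟩, hcb⟩)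

-- Up to sign, `-a`, `b`, `c` enter the definition of `Dt` symmetrically; use the representation of
-- whichever has the largest support.
theorem dt_fanD_iff (hZ : CondZ G) : Dt fanD a b c ↔
    (a = b ∧ SuppLE c a) ∨ (a = c ∧ SuppLE b a) ∨ (b = -c ∧ SuppLE a c) := by
  constructor
  · rintro ⟨ha, hb, hc⟩
    change fanD (-b) (-a) c at hb
    change fanD (-c) b (-a) at hc
    rcases suppLE_greatest_cases hZ a b c with ⟨hba, hca⟩ | ⟨hab, hcb⟩ | ⟨hac, hbc⟩
    · rcases fanD_trichotomy_of_suppLE ha hba hca with rfl | rfl | h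
      · exact .inl ⟨rfl, hca⟩
      · exact .inr (.inl ⟨rfl, hba⟩)
      · exact .inr (.inr h)
    · rcases fanD_trichotomy_of_suppLE hb (by simpa) (by simpa) with h | rfl | ⟨h, hbc⟩
      · obtain rfl := neg_injective h
        exact .inl ⟨rfl, hcb⟩
      · exact .inr (.inr ⟨(neg_neg b).symm, suppLE_neg_right.mpr hab⟩)
      · obtain rfl := neg_injective h
        exact .inr (.inl ⟨rfl, suppLE_neg_left.mp hbc⟩)
    · rcases fanD_trichotomy_of_suppLE hc (by simpa) (by simpa) with rfl | h | ⟨h, hca⟩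
      · exact .inr (.inr ⟨rfl, hac⟩)
      · obtain rfl := neg_injective h
        exact .inr (.inl ⟨rfl, hbc⟩)
      · obtain rfl := h.trans (neg_neg a)
        exact .inl ⟨rfl, by simpa using hca⟩
  · rintro (⟨rfl, h⟩ | ⟨rfl, h⟩ | ⟨rfl, h⟩)
    · exact dt_fanD_left h
    · exact dt_fanD_right h
    · exact dt_fanD_neg_self h

theorem exists_dt_fanD_of_dt_fanD (hZ : CondZ G) (hbc : Dt fanD a b c) (hde : Dt fanD c d e) :
    ∃ x : G, Dt fanD x b d ∧ Dt fanD a x e := by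
  rcases (dt_fanD_iff hZ).mp hbc with ⟨rfl, hca⟩ | ⟨rfl, hba⟩ | ⟨rfl, hac⟩ <;>
    rcases (dt_fanD_iff hZ).mp hde with ⟨rfl, hec⟩ | ⟨rfl, hdc⟩ | ⟨rfl, hce⟩
  · exact ⟨a, dt_fanD_left hca, dt_fanD_left (hec.trans hca)⟩
  · exact ⟨a, dt_fanD_left (hdc.trans hca), dt_fanD_left hca⟩
  · rcases suppLE_total hZ e a with hea | hae
    · exact ⟨a, dt_fanD_left (suppLE_neg_left.mpr hea), dt_fanD_left hea⟩
    · exact ⟨-e, dt_fanD_right (suppLE_neg_right.mpr hae), dt_fanD_neg_self hae⟩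
  · exact ⟨a, dt_fanD_right hba, dt_fanD_left hec⟩
  · rcases suppLE_total hZ b d with hbd | hdb
    · exact ⟨d, dt_fanD_right hbd, dt_fanD_right hdc⟩
    · exact ⟨b, dt_fanD_left hdb, dt_fanD_right hba⟩
  · exact ⟨-e, dt_fanD_right (suppLE_neg_right.mpr (hba.trans hce)), dt_fanD_neg_self hce⟩
  · rcases suppLE_total hZ e a with hea | hae
    · exact ⟨a, dt_fanD_neg_self hac, dt_fanD_left hea⟩
    · exact ⟨-e, dt_fanD_neg_self (suppLE_neg_left.mpr hec), dt_fanD_neg_self hae⟩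
  · exact ⟨-c, dt_fanD_left (suppLE_neg_right.mpr hdc), dt_fanD_neg_self hac⟩
  · exact ⟨-e, dt_fanD_right (by simpa using hce), dt_fanD_neg_self (hac.trans hce)⟩

theorem eq_of_dt_fanD_neg (hZ : CondZ G) (hab : Dt fanD x a (-b)) (hba : Dt fanD x b (-a)) :
    a = b := by
  simp only [dt_fanD_iff hZ, neg_neg, suppLE_neg_left, suppLE_neg_right] at hab hba
  rcases hab with ⟨rfl, hbx⟩ | ⟨rfl, hab⟩ | ⟨h, -⟩
  · rcases hba with ⟨h, -⟩ | ⟨h, -⟩ | ⟨h, -⟩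
    · exact h
    · exact eq_of_eq_neg_of_suppLE h hbx
    · exact h.symm
  · rcases hba with ⟨h, -⟩ | ⟨h, -⟩ | ⟨h, -⟩
    · exact (eq_of_eq_neg_of_suppLE h.symm (suppLE_neg_right.mp hab)).symm
    · exact (neg_injective h).symm
    · exact h.symm
  · exact h

end TernarySemigroup

/-- A ternary semigroup satisfying condition [Z], equipped with the fan representation
relation, is a real semigroup: all axioms [RS0]-[RS8] hold. -/
theorem stmt_9 {G : Type u} [TernarySemigroup G] (hZ : CondZ G) :
    IsRealSemigroup (fanD (G := G)) := by
  refine ⟨fun a b c ↦ ⟨fanD_symm, fanD_symm⟩, fanD_left, fun a b c d ↦ fanD_mul_right d, ?_, ?_, ?_,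
    ?_, ?_, fun a b c ↦ fanD_sq⟩
  · exact fun a b c d e ↦ exists_dt_fanD_of_dt_fanD hZ
  · exact fun a b c d e ↦ fanD_of_fanD_sq_mul
  · exact fun a b c d e ↦ mul_eq_mul_of_fanD
  · exact fun a b c ↦ dt_fanD_sq_mul
  · rintro a b ⟨x, hab, hba⟩
    exact eq_of_dt_fanD_neg hZ hab hba
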